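/- For every integer n ≥ 5, the number of Dyck paths D ∈ D̂_n with x_1(D) = 1 and y_2(D) = 0 equals M_{n-5}. -/

import Mathlib

/-- A Dyck path of semilength `n`, encoded as a word on `Bool`
(`true` = up step `u`, `false` = down step `d`). -/
def IsDyckWord (n : ℕ) (w : List Bool) : Prop :=
  w.length = 2 * n ∧ w.count true = n ∧ w.count false = n ∧
    ∀ p : List Bool, p <+: w → p.count false ≤ p.count true

/-- The (0-based) indices of the up steps of `w`. -/
def upIdxs (w : List Bool) : List ℕ := w.findIdxs (· == true)

/-- The (0-based) indices of the down steps of `w`. -/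
def downIdxs (w : List Bool) : List ℕ := w.findIdxs (· == false)

/-- `rStat w i` is the number of `d`'s strictly between the `i`-th and the
`(i+1)`-st `u` of `w` (with `i` 1-indexed). -/
def rStat (w : List Bool) (i : ℕ) : ℕ :=
  ((w.take ((upIdxs w).getD i 0)).drop ((upIdxs w).getD (i - 1) 0 + 1)).count false

/-- `sStat w i` is the number of `u`'s strictly between the `i`-th and the
`(i+1)`-st `d` of `w` (with `i` 1-indexed). -/
def sStat (w : List Bool) (i : ℕ) : ℕ :=
  ((w.take ((downIdxs w).getD i 0)).drop ((downIdxs w).getD (i - 1) 0 + 1)).count true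

/-- The statistic `L(D) = ∏_{i=1}^{n-1} C(r_i + s_i, r_i)` of a Dyck path of semilength `n`. -/
def LStat (n : ℕ) (w : List Bool) : ℕ :=
  ∏ i ∈ Finset.Icc 1 (n - 1), Nat.choose (rStat w i + sStat w i) (rStat w i)

/-- `dyckL n k` = the set `𝒟ₙᵏ` of Dyck paths of semilength `n` with `L(D) = k`. -/
def dyckL (n k : ℕ) : Set (List Bool) := {w | IsDyckWord n w ∧ LStat n w = k}

/-- A Motzkin path, encoded as a word on `Option Bool`
(`some true` = up, `some false` = down, `none` = horizontal). -/
def IsMotzkinWord (w : List (Option Bool)) : Prop :=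
  w.count (some false) = w.count (some true) ∧
    ∀ p : List (Option Bool), p <+: w → p.count (some false) ≤ p.count (some true)

/-- `motzkin n` = the `n`-th Motzkin number `Mₙ`, the number of Motzkin paths of length `n`. -/
noncomputable def motzkin (n : ℕ) : ℕ :=
  {w : List (Option Bool) | w.length = n ∧ IsMotzkinWord w}.ncard

/-- The Motzkin ballot number `T_{n,k}`: the number of Motzkin paths of length `n`
whose first down step is in position `k` (1-indexed); by convention `T_{k-1,k} = 1`,
counting the path of `k-1` horizontal steps. -/
noncomputable def motzkinBallot (n k : ℕ) : ℕ :=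
  if n + 1 = k then 1
  else
    {w : List (Option Bool) | w.length = n ∧ IsMotzkinWord w ∧
      w.getD (k - 1) none = some false ∧ ∀ j < k - 1, w.getD j none ≠ some false}.ncard

/-- Motzkin numbers with integer index: `Mᵢ = 0` for `i < 0`. -/
noncomputable def motzkinZ (i : ℤ) : ℤ := if 0 ≤ i then (motzkin i.toNat : ℤ) else 0

/-- Motzkin ballot numbers with integer first index: `T_{n,k} = 0` for `n < 0`. -/
noncomputable def motzkinBallotZ (n : ℤ) (k : ℕ) : ℤ :=
  if 0 ≤ n then (motzkinBallot n.toNat k : ℤ) else 0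

/-- The set of returns of a Dyck path `w` of semilength `n`:
indices `1 ≤ k ≤ n` such that the path touches the `x`-axis after `2k` steps. -/
def returns (n : ℕ) (w : List Bool) : Finset ℕ :=
  (Finset.Icc 1 n).filter fun k => (w.take (2 * k)).count false = (w.take (2 * k)).count true

/-- `dyckRS n r s` = the set `𝒟ₙ^{r,s}` of Dyck paths of semilength `n` having exactly one
index `i` with `rᵢ > 0` and `sᵢ > 0`, and such that at that index `rᵢ = r` and `sᵢ = s`. -/
def dyckRS (n r s : ℕ) : Set (List Bool) :=
  {w | IsDyckWord n w ∧ ∃ i ∈ Finset.Icc 1 (n - 1),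
    (0 < rStat w i ∧ 0 < sStat w i) ∧ rStat w i = r ∧ sStat w i = s ∧
      ∀ j ∈ Finset.Icc 1 (n - 1), 0 < rStat w j ∧ 0 < sStat w j → j = i}

/-- `twoStars n w k₁ k₂` says that `k₁ < k₂` are exactly the two indices `i` of `w`
with `rᵢ > 0` and `sᵢ > 0`. -/
def twoStars (n : ℕ) (w : List Bool) (k₁ k₂ : ℕ) : Prop :=
  k₁ ∈ Finset.Icc 1 (n - 1) ∧ k₂ ∈ Finset.Icc 1 (n - 1) ∧ k₁ < k₂ ∧
    (0 < rStat w k₁ ∧ 0 < sStat w k₁) ∧ (0 < rStat w k₂ ∧ 0 < sStat w k₂) ∧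
    ∀ j ∈ Finset.Icc 1 (n - 1), 0 < rStat w j ∧ 0 < sStat w j → j = k₁ ∨ j = k₂

/-- `xStat w k` = the number of indices `i < k` with `rᵢ = 0` and `sᵢ > 0`. -/
def xStat (w : List Bool) (k : ℕ) : ℕ :=
  ((Finset.Ico 1 k).filter fun i => rStat w i = 0 ∧ 0 < sStat w i).card

/-- `yStat w k` = the number of indices `i < k` with `rᵢ > 0` and `sᵢ = 0`. -/
def yStat (w : List Bool) (k : ℕ) : ℕ :=
  ((Finset.Ico 1 k).filter fun i => 0 < rStat w i ∧ sStat w i = 0).card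

/-- The generating function `m(x) = Σ Mₙ xⁿ` of the Motzkin numbers, over `ℚ`. -/
noncomputable def motzkinGF : PowerSeries ℚ := PowerSeries.mk fun n => (motzkin n : ℚ)

/-!
For `1 ≤ i < n` record the pair of flags `(rᵢ > 0, sᵢ > 0)` of a Dyck path, and append
`(true, false)`. Reading `(false, true)` as an up step, `(true, false)` as a down step and the other
two pairs as level steps, Dyck paths of semilength `n` correspond bijectively to paths of length `n`
that start at height `0` and reach height `-1` at their end and not before. A positive `rᵢ` is the
length of a block of the sequence of second flags, cut after each `true`; symmetrically for `sᵢ`.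
As `(true, true)` occurs exactly at `k₁` and `k₂`, the conditions `L = 4`, `x₁ = 1` and `y₂ = 0`
therefore force the shape

  `(false, true), (true, true), v, (true, true), p, (true, false), (true, false), q`

in which the first flags of `v` are all `false` and `p`, unless empty, starts with a `true` first
flag and has as many `true` first flags as `v` has `true` second flags. These conditions still
determine `v`, `p` and `q` from the path `v, p, (true, false), q`, which has four steps fewer and is
an arbitrary path without `(true, true)`, i.e. a Motzkin path of length `n - 5` followed by a down
step.
-/

/-! ### Gaps, flags and block lengths -/

/-- The list recording, for each letter `b` of `w` in order, the number of letters `!b` between it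
and the next `b`, or the end of `w`. -/
def gaps (b : Bool) : List Bool → List ℕ
  | [] => []
  | x :: w => if x = b then w.idxOf b :: gaps b w else gaps b w

/-- The list recording, for each letter `b` of `w` in order, whether it is followed by `!b`. -/
def switchFlags (b : Bool) (w : List Bool) : List Bool := (gaps b w).map (0 < ·)

theorem idxOf_pos_iff_head? (b : Bool) (w : List Bool) :
    0 < w.idxOf b ↔ w.head? = some (!b) := by
  cases w with
  | nil => simp
  | cons x w => cases x <;> cases b <;> simp

@[simp]
theorem switchFlags_nil (b : Bool) : switchFlags b [] = [] := rfl

@[simp]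
theorem switchFlags_cons_self (b : Bool) (w : List Bool) :
    switchFlags b (b :: w) = decide (w.head? = some (!b)) :: switchFlags b w := by
  simp [switchFlags, gaps, idxOf_pos_iff_head?]

@[simp]
theorem switchFlags_cons_of_ne {b x : Bool} (h : x ≠ b) (w : List Bool) :
    switchFlags b (x :: w) = switchFlags b w := by
  simp [switchFlags, gaps, h]

theorem length_switchFlags (b : Bool) (w : List Bool) :
    (switchFlags b w).length = w.count b := by
  induction w with
  | nil => rfl
  | cons x w ih => by_cases h : x = b <;> simp [h, ih]

/-- The position (0-based) of the `i`-th (0-based) letter `b` of `w`, with junk value `0` if there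
is none. -/
def letterPos (b : Bool) (w : List Bool) (i : ℕ) : ℕ := (w.findIdxs (· == b)).getD i 0

theorem letterPos_cons_self_zero (b : Bool) (w : List Bool) : letterPos b (b :: w) 0 = 0 := by
  simp [letterPos, List.findIdxs_cons]

theorem letterPos_cons_self_succ {b : Bool} {w : List Bool} {i : ℕ} (h : i < w.count b) :
    letterPos b (b :: w) (i + 1) = letterPos b w i + 1 := by
  have hi : i < (w.findIdxs (· == b)).length := by simpa [List.count] using h
  simp [letterPos, List.findIdxs_cons, List.findIdxs_start (s := 1), List.getElem?_eq_getElem hi]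

theorem letterPos_cons_of_ne {b x : Bool} {w : List Bool} {i : ℕ} (hx : x ≠ b)
    (h : i < w.count b) : letterPos b (x :: w) i = letterPos b w i + 1 := by
  have hi : i < (w.findIdxs (· == b)).length := by simpa [List.count] using h
  simp [letterPos, List.findIdxs_cons, List.findIdxs_start (s := 1), hx,
    List.getElem?_eq_getElem hi]

theorem count_not_take_letterPos_zero {b : Bool} {w : List Bool} (h : 0 < w.count b) :
    (w.take (letterPos b w 0)).count (!b) = w.idxOf b := by
  induction w with
  | nil => simp at h
  | cons x w ih =>
    by_cases hx : x = b
    · simp [hx, letterPos_cons_self_zero]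
    · have hw : 0 < w.count b := by simpa [hx] using h
      rw [letterPos_cons_of_ne hx hw, List.take_succ_cons, List.count_cons, ih hw]
      cases x <;> cases b <;> simp_all

theorem getElem?_gaps {b : Bool} {w : List Bool} {i : ℕ} (h : i + 1 < w.count b) :
    (gaps b w)[i]?
      = some (((w.take (letterPos b w (i + 1))).drop (letterPos b w i + 1)).count (!b)) := by
  induction w generalizing i with
  | nil => simp at h
  | cons x w ih =>
    by_cases hx : x = b
    · subst hx
      have hi : i < w.count x := by simpa using h
      rw [letterPos_cons_self_succ hi]
      cases i with
      | zero => simp [gaps, letterPos_cons_self_zero, count_not_take_letterPos_zero hi]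
      | succ i => simpa [gaps, letterPos_cons_self_succ (Nat.lt_of_succ_lt hi)] using ih hi
    · have hi : i + 1 < w.count b := by simpa [hx] using h
      rw [letterPos_cons_of_ne hx hi, letterPos_cons_of_ne hx (Nat.lt_of_succ_lt hi)]
      simpa [gaps, hx] using ih hi

theorem getElem?_gaps_true {w : List Bool} {i : ℕ} (h : i + 1 < w.count true) :
    (gaps true w)[i]? = some (rStat w (i + 1)) :=
  getElem?_gaps h

theorem getElem?_gaps_false {w : List Bool} {i : ℕ} (h : i + 1 < w.count false) :
    (gaps false w)[i]? = some (sStat w (i + 1)) :=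
  getElem?_gaps h

/-- The length of the `j`-th (0-based) block of a list cut after each of its letters satisfying
`p`. -/
def blockLength {α : Type*} (p : α → Bool) : List α → ℕ → ℕ
  | [], _ => 0
  | a :: l, 0 => if p a then 1 else blockLength p l 0 + 1
  | a :: l, j + 1 => blockLength p l (if p a then j else j + 1)

section BlockLength

variable {α β : Type*} {p : α → Bool}

theorem blockLength_map (f : β → α) (l : List β) (j : ℕ) :
    blockLength p (l.map f) j = blockLength (p ∘ f) l j := by
  induction l generalizing j with
  | nil => rfl
  | cons a l ih => cases j <;> simp [blockLength, ih]

theorem blockLength_append_cons {a : α} (ha : p a = true) (l m : List α) (j : ℕ) :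
    blockLength p (l ++ a :: m) (l.countP p + 1 + j) = blockLength p m j := by
  induction l with
  | nil => simp [blockLength, ha, Nat.add_comm]
  | cons x l ih =>
    by_cases hx : p x <;> simpa [blockLength, hx, Nat.add_right_comm _ 1] using ih

theorem blockLength_zero_eq_one_iff {l : List α} (hl : ∃ a ∈ l, p a = true) :
    blockLength p l 0 = 1 ↔ ∃ a ∈ l.head?, p a = true := by
  match l with
  | [] => simp at hl
  | [a] => simp_all [blockLength]
  | a :: b :: l => by_cases ha : p a <;> by_cases hb : p b <;> simp [blockLength, ha, hb]

theorem exists_eq_append_cons_of_lt_countP {l : List α} {j : ℕ} (h : j < l.countP p) :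
    ∃ q a m, l = q ++ a :: m ∧ p a = true ∧ q.countP p = j := by
  induction l generalizing j with
  | nil => simp at h
  | cons x l ih =>
    by_cases hx : p x
    · cases j with
      | zero => exact ⟨[], x, l, rfl, hx, rfl⟩
      | succ j =>
        obtain ⟨q, a, m, rfl, ha, hq⟩ := ih (j := j) (by simpa [hx] using h)
        exact ⟨x :: q, a, m, rfl, ha, by simp [hx, hq]⟩
    · obtain ⟨q, a, m, rfl, ha, hq⟩ := ih (j := j) (by simpa [hx] using h)
      exact ⟨x :: q, a, m, rfl, ha, by simp [hx, hq]⟩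

theorem lt_countP_of_blockLength_pos {l : List α} {j : ℕ} (h : 0 < blockLength p l (j + 1)) :
    j < l.countP p := by
  induction l generalizing j with
  | nil => simp [blockLength] at h
  | cons x l ih => cases j <;> by_cases hx : p x <;> simp_all [blockLength]

theorem blockLength_succ_eq_one_iff {l : List α} (hl : ∀ a ∈ l.getLast?, p a = true) {j : ℕ} :
    blockLength p l (j + 1) = 1 ↔
      ∃ q a b m, l = q ++ a :: b :: m ∧ p a = true ∧ p b = true ∧ q.countP p = j := by
  constructor
  · intro h
    obtain ⟨q, a, m, rfl, ha, rfl⟩ :=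
      exists_eq_append_cons_of_lt_countP (lt_countP_of_blockLength_pos (h ▸ Nat.one_pos))
    have hm : blockLength p m 0 = 1 := by rwa [← blockLength_append_cons ha q m 0]
    cases m with
    | nil => simp [blockLength] at hm
    | cons b m =>
      have hlast : ∃ x ∈ b :: m, p x = true :=
        ⟨_, List.getLast_mem (List.cons_ne_nil b m), hl _ (by
          rw [List.getLast?_append, List.getLast?_cons_cons, List.getLast?_eq_some_getLast]
          rfl)⟩
      have hb : p b = true := by simpa using (blockLength_zero_eq_one_iff hlast).1 hm
      exact ⟨q, a, b, m, rfl, ha, hb, rfl⟩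
  · rintro ⟨q, a, b, m, rfl, ha, hb, rfl⟩
    exact (blockLength_append_cons ha q (b :: m) 0).trans (by simp [blockLength, hb])

end BlockLength

theorem idxOf_eq_blockLength {b : Bool} {w : List Bool} (h : w.head? = some (!b)) :
    w.idxOf b = blockLength id (switchFlags (!b) w) 0 := by
  induction w with
  | nil => simp at h
  | cons x w ih =>
    obtain rfl : x = !b := by simpa using h
    match w with
    | [] => simp [blockLength]
    | y :: w =>
      by_cases hy : y = b
      · simp_all [blockLength]
      · obtain rfl : y = !b := Bool.eq_not_iff.2 hy
        have hw := ih rfl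
        simp only [ne_eq, Bool.not_eq_eq_eq_not, Bool.eq_not_self, not_false_eq_true,
          List.idxOf_cons_ne, switchFlags_cons_self, Bool.not_not, blockLength, id_eq,
          decide_eq_true_eq, List.head?_cons, Option.some.injEq] at hw ⊢
        grind

theorem gap_eq_blockLength {b : Bool} {w : List Bool} {i g : ℕ} (hi : (gaps b w)[i]? = some g)
    (hg : 0 < g) :
    g = blockLength id (switchFlags (!b) w)
      (((switchFlags b w).take i).countP id + if w.head? = some b then 0 else 1) := by
  induction w generalizing i with
  | nil => simp [gaps] at hi
  | cons x w ih =>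
    by_cases hx : x = b
    · subst hx
      cases i with
      | zero =>
        obtain rfl : w.idxOf x = g := by simpa [gaps] using hi
        simpa using idxOf_eq_blockLength ((idxOf_pos_iff_head? x w).1 hg)
      | succ i =>
        have hi : (gaps x w)[i]? = some g := by simpa [gaps] using hi
        match w with
        | [] => simp [gaps] at hi
        | y :: w =>
          have ih := ih hi
          by_cases hy : y = x
          · simpa [hy] using ih
          · simpa [hy, Bool.eq_not_iff.2 hy] using ih
    · obtain rfl : x = !b := Bool.eq_not_iff.2 hx
      have hi : (gaps b w)[i]? = some g := by simpa [gaps] using hi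
      match w with
      | [] => simp [gaps] at hi
      | y :: w =>
        have ih := ih hi
        by_cases hy : y = b
        · simpa [hy, blockLength] using ih
        · simpa [hy, Bool.eq_not_iff.2 hy, blockLength] using ih

/-! ### Words with prescribed flags -/

/-- The conditions on two flag lists to be the lists `switchFlags true` and `switchFlags false` of
a word with first letter `b` and last letter `false`. -/
def Realizable (b : Bool) (l m : List Bool) : Prop :=
  (∀ x ∈ l.getLast?, x = true) ∧ m.getLast? = some false ∧
    l.countP id = m.countP id + b.toNat

theorem realizable_true_cons (a : Bool) (l m : List Bool) :
    Realizable true (a :: l) m ↔ Realizable (!a) l m := by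
  cases l <;> cases a <;> simp [Realizable, -List.countP_eq_zero, eq_comm]

theorem realizable_false_cons (a : Bool) (l : List Bool) {m : List Bool} (hm : m ≠ []) :
    Realizable false l (a :: m) ↔ Realizable a l m := by
  cases m with
  | nil => exact absurd rfl hm
  | cons x m => cases a <;> simp [Realizable]

theorem eq_nil_of_countP_eq_zero {l : List Bool} (hl : ∀ x ∈ l.getLast?, x = true)
    (h : l.countP id = 0) : l = [] := by
  by_contra hne
  have hlast := hl _ (List.getLast?_eq_some_getLast hne)
  exact List.countP_eq_zero.1 h _ (List.getLast_mem hne) hlast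

theorem realizable_false_singleton (a : Bool) (l : List Bool) :
    Realizable false l [a] ↔ a = false ∧ l = [] := by
  constructor
  · rintro ⟨hl, ha, hc⟩
    obtain rfl : a = false := by simpa using ha
    exact ⟨rfl, eq_nil_of_countP_eq_zero hl (by simpa using hc)⟩
  · rintro ⟨rfl, rfl⟩
    simp [Realizable]

theorem switchFlags_false_ne_nil {w : List Bool} (h : w.getLast? = some false) :
    switchFlags false w ≠ [] := by
  rw [← List.length_pos_iff, length_switchFlags, List.count_pos_iff]
  exact List.mem_of_getLast? h

theorem realizable_switchFlags {c : Bool} {w : List Bool} (hw : (c :: w).getLast? = some false) :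
    Realizable c (switchFlags true (c :: w)) (switchFlags false (c :: w)) := by
  induction w generalizing c with
  | nil =>
    obtain rfl : c = false := by simpa using hw
    simp [realizable_false_singleton]
  | cons x w ih =>
    have hx : (x :: w).getLast? = some false := by simpa using hw
    have ih := ih hx
    cases c with
    | true => cases x <;> simpa [realizable_true_cons] using ih
    | false =>
      have hne := switchFlags_false_ne_nil hx
      rw [switchFlags_cons_self, realizable_false_cons _ _ hne]
      cases x <;> simpa using ih

theorem Realizable.exists_switchFlags {b : Bool} {l m : List Bool} (h : Realizable b l m) :
    ∃ w, (b :: w).getLast? = some false ∧ switchFlags true (b :: w) = l ∧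
      switchFlags false (b :: w) = m := by
  match b, l, m with
  | true, [], m => simp [Realizable] at h
  | true, a :: l, m =>
    obtain ⟨w, hw, rfl, rfl⟩ := ((realizable_true_cons a l m).1 h).exists_switchFlags
    exact ⟨(!a) :: w, by simpa using hw, by simp, by simp⟩
  | false, l, [] => simp [Realizable] at h
  | false, l, [a] =>
    obtain ⟨rfl, rfl⟩ := (realizable_false_singleton a l).1 h
    exact ⟨[], by simp⟩
  | false, l, a :: y :: m =>
    obtain ⟨w, hw, hl, hm⟩ :=
      ((realizable_false_cons a l (List.cons_ne_nil y m)).1 h).exists_switchFlags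
    exact ⟨a :: w, by simpa using hw, by simpa using hl, by simp [hm]⟩
termination_by l.length + m.length

theorem eq_of_switchFlags_eq {c : Bool} {w w' : List Bool}
    (hw : (c :: w).getLast? = some false) (hw' : (c :: w').getLast? = some false)
    (htrue : switchFlags true (c :: w) = switchFlags true (c :: w'))
    (hfalse : switchFlags false (c :: w) = switchFlags false (c :: w')) : w = w' := by
  induction w generalizing c w' with
  | nil =>
    cases w' with
    | nil => rfl
    | cons y w' =>
      obtain rfl : c = false := by simpa using hw
      have hne := switchFlags_false_ne_nil (w := y :: w') (by simpa using hw')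
      simp [hne.symm] at hfalse
  | cons x w ih =>
    have hx : (x :: w).getLast? = some false := by simpa using hw
    cases w' with
    | nil =>
      obtain rfl : c = false := by simpa using hw'
      simp [switchFlags_false_ne_nil hx] at hfalse
    | cons y w' =>
      obtain rfl : x = y := by cases c <;> cases x <;> cases y <;> simp_all
      have hy : (x :: w').getLast? = some false := by simpa using hw'
      rw [ih hx hy (by cases c <;> simp_all) (by cases c <;> simp_all)]

/-- The lattice path `w` started at height `h` never goes below height `0`. -/
def StaysAbove (h : ℕ) (w : List Bool) : Prop :=
  ∀ p : List Bool, p <+: w → p.count false ≤ p.count true + h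

theorem staysAbove_nil (h : ℕ) : StaysAbove h [] := by
  simp [StaysAbove]

theorem staysAbove_true_cons {h : ℕ} {w : List Bool} :
    StaysAbove h (true :: w) ↔ StaysAbove (h + 1) w := by
  refine ⟨fun H p hp => ?_, fun H p hp => ?_⟩
  · simpa [← Nat.add_assoc, Nat.add_right_comm _ 1 h] using H (true :: p) (by simpa using hp)
  · rcases List.prefix_cons_iff.1 hp with rfl | ⟨p', rfl, hp'⟩
    · simp
    · simpa [← Nat.add_assoc, Nat.add_right_comm _ 1 h] using H p' hp'

theorem staysAbove_succ_false_cons {h : ℕ} {w : List Bool} :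
    StaysAbove (h + 1) (false :: w) ↔ StaysAbove h w := by
  refine ⟨fun H p hp => ?_, fun H p hp => ?_⟩
  · simpa [← Nat.add_assoc] using H (false :: p) (by simpa using hp)
  · rcases List.prefix_cons_iff.1 hp with rfl | ⟨p', rfl, hp'⟩
    · simp
    · simpa [← Nat.add_assoc] using H p' hp'

theorem not_staysAbove_zero_false_cons (w : List Bool) : ¬ StaysAbove 0 (false :: w) := fun h => by
  simpa using h [false] (by simp)

/-- The condition on two flag lists, realized by a word with first letter `b`, for the word started
at height `h` to stay above height `0`: the `(k + h + 1)`-st `false` is preceded by `k + 1` letters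
`true`. -/
def FlagsStayAbove (h : ℕ) (b : Bool) (l m : List Bool) : Prop :=
  ∀ k, k + h < m.length → (l.take k).countP id + (!b).toNat ≤ (m.take (k + h)).countP id

theorem flagsStayAbove_true_cons {h : ℕ} {a : Bool} {l m : List Bool} :
    FlagsStayAbove h true (a :: l) m ↔ FlagsStayAbove (h + 1) (!a) l m := by
  refine ⟨fun H k hk => ?_, fun H k hk => ?_⟩
  · have := H (k + 1) (by omega)
    rw [Nat.add_right_comm] at this
    cases a <;> simpa [Nat.add_assoc] using this
  · cases k with
    | zero => simp
    | succ k =>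
      have := H k (by omega)
      rw [Nat.add_right_comm]
      cases a <;> simpa [Nat.add_assoc] using this

theorem flagsStayAbove_succ_false_cons {h : ℕ} {a : Bool} {l m : List Bool} :
    FlagsStayAbove (h + 1) false l (a :: m) ↔ FlagsStayAbove h a l m := by
  refine forall_congr' fun k => ?_
  cases a <;> simp [← Nat.add_assoc]

theorem not_flagsStayAbove_zero_false_cons (a : Bool) (l m : List Bool) :
    ¬ FlagsStayAbove 0 false l (a :: m) := fun h => by
  simpa using h 0 (by simp)

theorem staysAbove_iff_flagsStayAbove {h : ℕ} {c : Bool} {w : List Bool}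
    (hw : (c :: w).getLast? = some false) :
    StaysAbove h (c :: w) ↔
      FlagsStayAbove h c (switchFlags true (c :: w)) (switchFlags false (c :: w)) := by
  induction w generalizing c h with
  | nil =>
    obtain rfl : c = false := by simpa using hw
    cases h with
    | zero => simp [not_staysAbove_zero_false_cons, not_flagsStayAbove_zero_false_cons]
    | succ h =>
      simp [staysAbove_succ_false_cons, staysAbove_nil, FlagsStayAbove]
  | cons x w ih =>
    have hx : (x :: w).getLast? = some false := by simpa using hw
    cases c with
    | true =>
      rw [staysAbove_true_cons, ih hx, switchFlags_cons_self, flagsStayAbove_true_cons]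
      cases x <;> simp
    | false =>
      cases h with
      | zero => simp [not_staysAbove_zero_false_cons, not_flagsStayAbove_zero_false_cons]
      | succ h =>
        rw [staysAbove_succ_false_cons, ih hx, switchFlags_cons_self,
          flagsStayAbove_succ_false_cons]
        cases x <;> simp

/-! ### Dyck words as first-passage paths -/

/-- The letters `(rᵢ > 0, sᵢ > 0)` of a Dyck word for `1 ≤ i < n`, followed by `(true, false)`.
As a path, `(false, true)` is an up step, `(true, false)` a down step and the other two letters are
level steps of two colors. -/
def flagPairs (w : List Bool) : List (Bool × Bool) :=
  List.zip (switchFlags true w) (switchFlags false w)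

/-- The path `X`, with the steps described at `flagPairs`, starts at height `h` and reaches height
`-1` at its end and not before. -/
def IsFirstPassage : ℤ → List (Bool × Bool) → Prop
  | h, [] => h = -1
  | h, x :: X => 0 ≤ h ∧ IsFirstPassage (h + x.2.toNat - x.1.toNat) X

theorem isFirstPassage_iff_take {h : ℤ} {X : List (Bool × Bool)} :
    IsFirstPassage h X ↔
      (∀ k < X.length, ((X.take k).countP Prod.fst : ℤ) ≤ h + (X.take k).countP Prod.snd) ∧
        (X.countP Prod.fst : ℤ) = h + X.countP Prod.snd + 1 := by
  induction X generalizing h with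
  | nil => simpa [IsFirstPassage] using eq_neg_iff_add_eq_zero.trans eq_comm
  | cons x X ih =>
    obtain ⟨r, s⟩ := x
    simp only [IsFirstPassage, ih, List.length_cons, Nat.forall_lt_succ_left']
    cases r <;> cases s <;> simp [← and_assoc] <;> grind

theorem isFirstPassage_append_of_countP_le {h : ℤ} {u X : List (Bool × Bool)}
    (hu : (u.countP Prod.fst : ℤ) ≤ h) :
    IsFirstPassage h (u ++ X) ↔
      IsFirstPassage (h + u.countP Prod.snd - u.countP Prod.fst) X := by
  induction u generalizing h with
  | nil => simp
  | cons x u ih =>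
    obtain ⟨r, s⟩ := x
    have hr : (u.countP Prod.fst : ℤ) + r.toNat ≤ h := by
      cases r <;> simpa using hu
    rw [List.cons_append, IsFirstPassage, ih (by simp only; omega), and_iff_right (by omega)]
    cases r <;> cases s <;> simp <;> ring_nf

theorem IsFirstPassage.getLast?_eq {h : ℤ} {X : List (Bool × Bool)} (hX : IsFirstPassage h X)
    (h0 : 0 ≤ h) : X.getLast? = some (true, false) := by
  induction X generalizing h with
  | nil => exact absurd hX (by simp only [IsFirstPassage]; omega)
  | cons x X ih =>
    obtain ⟨-, hX⟩ := hX
    cases X with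
    | nil =>
      obtain ⟨r, s⟩ := x
      cases r <;> cases s <;> simp [IsFirstPassage] at hX ⊢ <;> omega
    | cons y X => simpa using ih hX hX.1

theorem isFirstPassage_iff_flags {X : List (Bool × Bool)} :
    IsFirstPassage 0 X ↔ Realizable true (X.map Prod.fst) (X.map Prod.snd) ∧
      FlagsStayAbove 0 true (X.map Prod.fst) (X.map Prod.snd) := by
  have hcount {Y : List (Bool × Bool)} {f : Bool × Bool → Bool} :
      (Y.map f).countP id = Y.countP f := by simp [List.countP_map]
  constructor
  · intro hX
    have hlast := hX.getLast?_eq le_rfl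
    obtain ⟨htake, hc⟩ := isFirstPassage_iff_take.1 hX
    refine ⟨⟨by simp [hlast], by simp [hlast], ?_⟩, fun k hk => ?_⟩
    · simp only [hcount, Bool.toNat_true]
      omega
    · have := htake k (by simpa using hk)
      simp only [← List.map_take, hcount]
      simpa using this
  · rintro ⟨⟨-, -, hc⟩, habove⟩
    simp only [hcount, Bool.toNat_true] at hc
    refine isFirstPassage_iff_take.2 ⟨fun k hk => ?_, by omega⟩
    have := habove k (by simpa using hk)
    simp only [← List.map_take, hcount] at this
    simpa using this

theorem map_flagPairs {n : ℕ} {w : List Bool} (htrue : w.count true = n)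
    (hfalse : w.count false = n) :
    (flagPairs w).map Prod.fst = switchFlags true w ∧
      (flagPairs w).map Prod.snd = switchFlags false w := by
  have hlen : (switchFlags true w).length = (switchFlags false w).length := by
    rw [length_switchFlags, length_switchFlags, htrue, hfalse]
  exact ⟨List.map_fst_zip hlen.le, List.map_snd_zip hlen.ge⟩

theorem isDyckWord_iff_staysAbove {n : ℕ} {w : List Bool} :
    IsDyckWord n w ↔ w.count true = n ∧ w.count false = n ∧ StaysAbove 0 w := by
  have := List.count_true_add_count_false w
  simp only [IsDyckWord, StaysAbove, Nat.add_zero]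
  grind

theorem StaysAbove.exists_eq_cons {w : List Bool} (h : StaysAbove 0 w) (hw : w ≠ []) :
    ∃ t, w = true :: t := by
  match w with
  | true :: t => exact ⟨t, rfl⟩
  | false :: t => exact absurd h (not_staysAbove_zero_false_cons t)

theorem StaysAbove.getLast?_eq {w : List Bool} (h : StaysAbove 0 w) (hw : w ≠ [])
    (hc : w.count true = w.count false) : w.getLast? = some false := by
  obtain ⟨p, x, rfl⟩ := (List.eq_nil_or_concat' w).resolve_left hw
  cases x with
  | false => simp
  | true =>
    have := h p (List.prefix_append p _)
    rw [List.count_append, List.count_append] at hc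
    grind

theorem IsDyckWord.exists_eq_cons {n : ℕ} {w : List Bool} (hn : 0 < n) (hw : IsDyckWord n w) :
    ∃ t, w = true :: t ∧ (true :: t).getLast? = some false := by
  obtain ⟨htrue, hfalse, habove⟩ := isDyckWord_iff_staysAbove.1 hw
  have hne : w ≠ [] := by
    rintro rfl
    simp_all
  obtain ⟨t, rfl⟩ := habove.exists_eq_cons hne
  exact ⟨t, rfl, habove.getLast?_eq hne (htrue.trans hfalse.symm)⟩

theorem IsDyckWord.length_flagPairs {n : ℕ} {w : List Bool} (hw : IsDyckWord n w) :
    (flagPairs w).length = n := by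
  simp [flagPairs, length_switchFlags, hw.2.1, hw.2.2.1]

theorem IsDyckWord.isFirstPassage_flagPairs {n : ℕ} {w : List Bool} (hn : 0 < n)
    (hw : IsDyckWord n w) : IsFirstPassage 0 (flagPairs w) := by
  obtain ⟨htrue, hfalse, habove⟩ := isDyckWord_iff_staysAbove.1 hw
  obtain ⟨t, rfl, hlast⟩ := hw.exists_eq_cons hn
  obtain ⟨hfst, hsnd⟩ := map_flagPairs htrue hfalse
  rw [isFirstPassage_iff_flags, hfst, hsnd]
  exact ⟨realizable_switchFlags hlast, (staysAbove_iff_flagsStayAbove hlast).1 habove⟩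

theorem injOn_flagPairs {n : ℕ} (hn : 0 < n) : Set.InjOn flagPairs {w | IsDyckWord n w} := by
  intro w hw w' hw' heq
  obtain ⟨hfst, hsnd⟩ := map_flagPairs hw.2.1 hw.2.2.1
  obtain ⟨hfst', hsnd'⟩ := map_flagPairs hw'.2.1 hw'.2.2.1
  obtain ⟨t, rfl, hlast⟩ := hw.exists_eq_cons hn
  obtain ⟨t', rfl, hlast'⟩ := hw'.exists_eq_cons hn
  rw [eq_of_switchFlags_eq hlast hlast' (by rw [← hfst, ← hfst', heq])
    (by rw [← hsnd, ← hsnd', heq])]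

theorem IsFirstPassage.exists_isDyckWord {X : List (Bool × Bool)} (hX : IsFirstPassage 0 X) :
    ∃ w, IsDyckWord X.length w ∧ flagPairs w = X := by
  obtain ⟨hreal, habove⟩ := isFirstPassage_iff_flags.1 hX
  obtain ⟨t, hlast, hfst, hsnd⟩ := hreal.exists_switchFlags
  refine ⟨true :: t, isDyckWord_iff_staysAbove.2 ⟨?_, ?_, ?_⟩, ?_⟩
  · rw [← length_switchFlags, hfst, List.length_map]
  · rw [← length_switchFlags, hsnd, List.length_map]
  · rwa [staysAbove_iff_flagsStayAbove hlast, hfst, hsnd]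
  · rw [flagPairs, hfst, hsnd, List.zip_map', List.map_id']

theorem bijOn_flagPairs {n : ℕ} (hn : 0 < n) :
    Set.BijOn flagPairs {w | IsDyckWord n w} {X | X.length = n ∧ IsFirstPassage 0 X} := by
  refine ⟨fun w hw => ⟨hw.length_flagPairs, hw.isFirstPassage_flagPairs hn⟩,
    injOn_flagPairs hn, ?_⟩
  rintro X ⟨rfl, hX⟩
  exact hX.exists_isDyckWord

/-! ### The statistics in terms of flag pairs -/

theorem getElem?_switchFlags_true {w : List Bool} {i : ℕ} (h : i + 1 < w.count true) :
    (switchFlags true w)[i]? = some (decide (0 < rStat w (i + 1))) := by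
  simp [switchFlags, getElem?_gaps_true h]

theorem getElem?_switchFlags_false {w : List Bool} {i : ℕ} (h : i + 1 < w.count false) :
    (switchFlags false w)[i]? = some (decide (0 < sStat w (i + 1))) := by
  simp [switchFlags, getElem?_gaps_false h]

section FlagPairsStatistics

variable {n : ℕ} {w : List Bool}

theorem IsDyckWord.getElem?_flagPairs (hw : IsDyckWord n w) {i : ℕ} (hi : i + 1 < n) :
    (flagPairs w)[i]? = some (decide (0 < rStat w (i + 1)), decide (0 < sStat w (i + 1))) :=
  List.getElem?_zip_eq_some.2 ⟨getElem?_switchFlags_true (by rwa [hw.2.1]),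
    getElem?_switchFlags_false (by rwa [hw.2.2.1])⟩

theorem IsDyckWord.getElem?_flagPairs_eq_star_iff (hw : IsDyckWord n w) {i : ℕ} :
    (flagPairs w)[i]? = some (true, true) ↔
      i + 1 ∈ Finset.Icc 1 (n - 1) ∧ 0 < rStat w (i + 1) ∧ 0 < sStat w (i + 1) := by
  have hlen := hw.length_flagPairs
  rcases lt_trichotomy (i + 1) n with hi | rfl | hi
  · have hmem : i + 1 ∈ Finset.Icc 1 (n - 1) := Finset.mem_Icc.2 (by omega)
    simp [hw.getElem?_flagPairs hi, hmem]
  · have hlast := (hw.isFirstPassage_flagPairs i.succ_pos).getLast?_eq le_rfl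
    rw [List.getLast?_eq_getElem?, hlen, Nat.add_sub_cancel] at hlast
    simp [hlast]
  · rw [List.getElem?_eq_none (hlen.le.trans (by omega)), Finset.mem_Icc]
    exact iff_of_false (by simp) (by omega)

theorem IsDyckWord.rStat_eq_blockLength (hw : IsDyckWord n w) {i : ℕ} (hi : i + 1 < n)
    (hr : 0 < rStat w (i + 1)) :
    rStat w (i + 1)
      = blockLength Prod.snd (flagPairs w) (((flagPairs w).take i).countP Prod.fst) := by
  obtain ⟨hfst, hsnd⟩ := map_flagPairs hw.2.1 hw.2.2.1
  obtain ⟨t, rfl, -⟩ := hw.exists_eq_cons (by omega)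
  have := gap_eq_blockLength (getElem?_gaps_true (by rwa [hw.2.1])) hr
  rw [this, ← hfst, Bool.not_true, ← hsnd, blockLength_map, ← List.map_take, List.countP_map]
  simp

theorem IsDyckWord.sStat_eq_blockLength (hw : IsDyckWord n w) {i : ℕ} (hi : i + 1 < n)
    (hs : 0 < sStat w (i + 1)) :
    sStat w (i + 1)
      = blockLength Prod.fst (flagPairs w) (((flagPairs w).take i).countP Prod.snd + 1) := by
  obtain ⟨hfst, hsnd⟩ := map_flagPairs hw.2.1 hw.2.2.1
  obtain ⟨t, rfl, -⟩ := hw.exists_eq_cons (by omega)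
  have := gap_eq_blockLength (getElem?_gaps_false (by rwa [hw.2.2.1])) hs
  rw [this, ← hsnd, Bool.not_false, ← hfst, blockLength_map, ← List.map_take, List.countP_map]
  simp

theorem card_filter_range_getElem? {α : Type*} [DecidableEq α] [BEq α] [LawfulBEq α]
    (X : List α) (a : α) (k : ℕ) :
    ((Finset.range k).filter fun i => X[i]? = some a).card = (X.take k).count a := by
  induction k with
  | zero => simp
  | succ k ih =>
    rw [Finset.range_add_one, Finset.filter_insert, List.take_add_one, List.count_append, ← ih]
    cases X[k]? <;> grind

theorem card_filter_Ico_one_succ (P : ℕ → Prop) [DecidablePred P] (k : ℕ) :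
    ((Finset.Ico 1 (k + 1)).filter P).card = ((Finset.range k).filter fun i => P (i + 1)).card := by
  rw [← Nat.zero_add 1, ← Finset.map_add_right_Ico, Finset.filter_map, Finset.card_map,
    Finset.range_eq_Ico]
  rfl

theorem IsDyckWord.xStat_eq_count (hw : IsDyckWord n w) {k : ℕ} (hk : k < n) :
    xStat w (k + 1) = ((flagPairs w).take k).count (false, true) := by
  rw [xStat, card_filter_Ico_one_succ, ← card_filter_range_getElem?]
  refine congrArg _ (Finset.filter_congr fun i hi => ?_)
  have := Finset.mem_range.1 hi
  simp [hw.getElem?_flagPairs (i := i) (by omega)]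

theorem IsDyckWord.yStat_eq_count (hw : IsDyckWord n w) {k : ℕ} (hk : k < n) :
    yStat w (k + 1) = ((flagPairs w).take k).count (true, false) := by
  rw [yStat, card_filter_Ico_one_succ, ← card_filter_range_getElem?]
  refine congrArg _ (Finset.filter_congr fun i hi => ?_)
  have := Finset.mem_range.1 hi
  simp [hw.getElem?_flagPairs (i := i) (by omega)]

end FlagPairsStatistics

theorem add_le_choose {r s : ℕ} (hr : 0 < r) (hs : 0 < s) : r + s ≤ Nat.choose (r + s) r := by
  induction r, hr using Nat.le_induction with
  | base => simp
  | succ r _ ih =>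
    obtain ⟨t, rfl⟩ := Nat.exists_eq_add_of_lt hs
    have hpos : 0 < Nat.choose (r + (0 + t + 1)) (r + 1) := Nat.choose_pos (by omega)
    rw [Nat.add_right_comm, Nat.choose_succ_succ']
    omega

theorem choose_mul_choose_eq_four_iff {r s r' s' : ℕ} (hr : 0 < r) (hs : 0 < s) (hr' : 0 < r')
    (hs' : 0 < s') :
    Nat.choose (r + s) r * Nat.choose (r' + s') r' = 4 ↔ (r = 1 ∧ s = 1) ∧ r' = 1 ∧ s' = 1 := by
  constructor
  · intro h
    have hle := add_le_choose hr hs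
    have hle' := add_le_choose hr' hs'
    have := Nat.mul_le_mul hle hle'
    rw [h] at this
    have : r + s ≤ 2 := by nlinarith
    have : r' + s' ≤ 2 := by nlinarith
    omega
  · rintro ⟨⟨rfl, rfl⟩, rfl, rfl⟩
    rfl

theorem LStat_eq_four_iff {n : ℕ} {w : List Bool} {k₁ k₂ : ℕ} (h : twoStars n w k₁ k₂) :
    LStat n w = 4 ↔ (rStat w k₁ = 1 ∧ sStat w k₁ = 1) ∧ rStat w k₂ = 1 ∧ sStat w k₂ = 1 := by
  obtain ⟨hk₁, hk₂, hlt, ⟨hr₁, hs₁⟩, ⟨hr₂, hs₂⟩, honly⟩ := h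
  have hprod : LStat n w = Nat.choose (rStat w k₁ + sStat w k₁) (rStat w k₁) *
      Nat.choose (rStat w k₂ + sStat w k₂) (rStat w k₂) := by
    refine Finset.prod_eq_mul k₁ k₂ hlt.ne ?_ (absurd hk₁) (absurd hk₂)
    intro j hj hne
    have hz : rStat w j = 0 ∨ sStat w j = 0 := by
      have := honly j hj
      omega
    rcases hz with hz | hz <;> simp [hz]
  rw [hprod, choose_mul_choose_eq_four_iff hr₁ hs₁ hr₂ hs₂]

section Occurrences

variable {α : Type*} {a : α}

theorem getElem?_append_cons_eq_some_iff {u Y : List α} (hu : a ∉ u) {k : ℕ} :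
    (u ++ a :: Y)[k]? = some a ↔ k = u.length ∨ ∃ m, k = u.length + 1 + m ∧ Y[m]? = some a := by
  rcases lt_trichotomy k u.length with hk | rfl | hk
  · rw [List.getElem?_append_left hk]
    refine iff_of_false (fun h => hu (List.mem_of_getElem? h)) ?_
    rintro (rfl | ⟨m, rfl, -⟩) <;> omega
  · simp
  · obtain ⟨m, rfl⟩ := Nat.exists_eq_add_of_lt hk
    rw [List.getElem?_append_right (by omega)]
    simp [Nat.add_assoc, Nat.add_comm 1]

theorem exists_eq_append_cons_of_first {X : List α} {i : ℕ} (h : X[i]? = some a)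
    (hfirst : ∀ k < i, X[k]? ≠ some a) : ∃ u Y, X = u ++ a :: Y ∧ u.length = i ∧ a ∉ u := by
  obtain ⟨hi, rfl⟩ := List.getElem?_eq_some_iff.1 h
  refine ⟨X.take i, X.drop (i + 1), by simp, by simp [hi.le], fun hmem => ?_⟩
  obtain ⟨k, hk, hka⟩ := List.mem_iff_getElem.1 hmem
  rw [List.length_take] at hk
  refine hfirst k (by omega) ?_
  rw [List.getElem?_eq_getElem (by omega), ← hka, List.getElem_take]

theorem getElem?_eq_some_iff_two_positions {X : List α} {i d : ℕ} :
    (∀ k, X[k]? = some a ↔ k = i ∨ k = i + 1 + d) ↔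
      ∃ u v R, X = u ++ a :: (v ++ a :: R) ∧ a ∉ u ∧ a ∉ v ∧ a ∉ R ∧
        u.length = i ∧ v.length = d := by
  constructor
  · intro h
    obtain ⟨u, Y, rfl, rfl, hu⟩ := exists_eq_append_cons_of_first ((h i).2 (Or.inl rfl))
      fun k hk => by rw [Ne, h]; omega
    have hY (m : ℕ) : Y[m]? = some a ↔ m = d := by
      have := h (u.length + 1 + m)
      rw [getElem?_append_cons_eq_some_iff hu] at this
      grind
    obtain ⟨v, R, rfl, rfl, hv⟩ := exists_eq_append_cons_of_first ((hY d).2 rfl)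
      fun k hk => by rw [Ne, hY]; omega
    refine ⟨u, v, R, rfl, hu, hv, fun hR => ?_, rfl, rfl⟩
    obtain ⟨m, hm⟩ := List.mem_iff_getElem?.1 hR
    have := (hY _).1 ((getElem?_append_cons_eq_some_iff hv).2 (Or.inr ⟨m, rfl, hm⟩))
    omega
  · rintro ⟨u, v, R, rfl, hu, hv, hR, rfl, rfl⟩ k
    have hRm (m : ℕ) : R[m]? ≠ some a := fun h => hR (List.mem_of_getElem? h)
    simp [getElem?_append_cons_eq_some_iff hu, getElem?_append_cons_eq_some_iff hv, hRm]

end Occurrences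

theorem IsDyckWord.twoStars_iff_getElem? {n : ℕ} {w : List Bool} (hw : IsDyckWord n w) {i d : ℕ} :
    twoStars n w (i + 1) (i + 1 + d + 1) ↔
      ∀ k, (flagPairs w)[k]? = some (true, true) ↔ k = i ∨ k = i + 1 + d := by
  simp only [hw.getElem?_flagPairs_eq_star_iff]
  constructor
  · rintro ⟨hi, hj, hlt, hposi, hposj, honly⟩ k
    constructor
    · rintro ⟨hk, hposk⟩
      have := honly _ hk hposk
      omega
    · rintro (rfl | rfl)
      exacts [⟨hi, hposi⟩, ⟨hj, hposj⟩]
  · intro h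
    obtain ⟨hi, hposi⟩ := (h i).2 (Or.inl rfl)
    obtain ⟨hj, hposj⟩ := (h (i + 1 + d)).2 (Or.inr rfl)
    refine ⟨hi, hj, by omega, hposi, hposj, fun k hk hposk => ?_⟩
    obtain ⟨k, rfl⟩ := Nat.exists_eq_add_of_le' (Finset.mem_Icc.1 hk).1
    have := (h k).1 ⟨hk, hposk⟩
    omega

theorem IsDyckWord.twoStars_iff {n : ℕ} {w : List Bool} (hw : IsDyckWord n w) {k₁ k₂ : ℕ} :
    twoStars n w k₁ k₂ ↔
      ∃ u v R, flagPairs w = u ++ (true, true) :: (v ++ (true, true) :: R) ∧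
        (true, true) ∉ u ∧ (true, true) ∉ v ∧ (true, true) ∉ R ∧
        u.length + 1 = k₁ ∧ (u ++ (true, true) :: v).length + 1 = k₂ := by
  constructor
  · intro h
    obtain ⟨i, rfl⟩ := Nat.exists_eq_add_of_le' (Finset.mem_Icc.1 h.1).1
    obtain ⟨d, rfl⟩ := Nat.exists_eq_add_of_lt h.2.2.1
    obtain ⟨u, v, R, hX, hu, hv, hR, rfl, rfl⟩ :=
      getElem?_eq_some_iff_two_positions.1 (hw.twoStars_iff_getElem?.1 h)
    exact ⟨u, v, R, hX, hu, hv, hR, rfl, by grind⟩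
  · rintro ⟨u, v, R, hX, hu, hv, hR, rfl, rfl⟩
    have hlen : (u ++ (true, true) :: v).length = u.length + 1 + v.length := by
      grind
    rw [hlen, hw.twoStars_iff_getElem?, getElem?_eq_some_iff_two_positions]
    exact ⟨u, v, R, hX, hu, hv, hR, rfl, rfl⟩

/-! ### The shape of the counted paths -/

section HatShape

variable {u v R : List (Bool × Bool)}

theorem countP_fst_eq_zero (hu : ∀ y ∈ u, y.1 = false) : u.countP Prod.fst = 0 :=
  List.countP_eq_zero.2 (by simpa using hu)

theorem blockLength_snd_zero_one_iff (Y : List (Bool × Bool)) (hu : ∀ y ∈ u, y.1 = false)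
    (hcount : u.count (false, true) = 1) :
    blockLength Prod.snd (u ++ (true, true) :: Y) 0 = 1 ∧
      blockLength Prod.snd (u ++ (true, true) :: Y) 1 = 1 ↔ u = [(false, true)] := by
  constructor
  · rintro ⟨h0, h1⟩
    match u with
    | [] => simp at hcount
    | (true, b) :: u => simp at hu
    | (false, false) :: u =>
      rw [blockLength_zero_eq_one_iff ⟨(true, true), by simp⟩] at h0
      simp at h0
    | (false, true) :: u =>
      have h1 : blockLength Prod.snd (u ++ (true, true) :: Y) 0 = 1 := by
        simpa [blockLength] using h1
      rw [blockLength_zero_eq_one_iff ⟨(true, true), by simp⟩] at h1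
      match u with
      | [] => rfl
      | (true, b) :: u => simp at hu
      | (false, false) :: u => simp at h1
      | (false, true) :: u => simp at hcount
  · rintro rfl
    simp [blockLength]

theorem blockLength_fst_append_cons (hv : ∀ y ∈ v, y.1 = false) (j : ℕ) :
    blockLength Prod.fst (v ++ (true, true) :: R) (j + 1) = blockLength Prod.fst R j := by
  rw [← blockLength_append_cons (p := Prod.fst) (a := (true, true)) rfl v R j,
    countP_fst_eq_zero hv, Nat.zero_add, Nat.add_comm]

theorem blockLength_fst_zero_succ_iff (hR : R.getLast? = some (true, false))
    (hstar : (true, true) ∉ R) (g : ℕ) :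
    blockLength Prod.fst R 0 = 1 ∧ blockLength Prod.fst R (g + 1) = 1 ↔
      ∃ p q, R = p ++ (true, false) :: (true, false) :: q ∧ p.countP Prod.fst = g ∧
        ∀ x ∈ p.head?, x.1 = true := by
  rw [blockLength_zero_eq_one_iff ⟨(true, false), List.mem_of_getLast? hR, rfl⟩,
    blockLength_succ_eq_one_iff (by simp [hR])]
  constructor
  · rintro ⟨⟨x, hx, hx1⟩, p, ⟨a, a'⟩, ⟨b, b'⟩, q, rfl, rfl, rfl, rfl⟩
    have ha : a' = false := by simp_all
    have hb : b' = false := by simp_all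
    subst ha hb
    refine ⟨p, q, rfl, rfl, fun y hy => ?_⟩
    simp_all
  · rintro ⟨p, q, rfl, hp, hhead⟩
    refine ⟨?_, p, _, _, q, rfl, rfl, rfl, hp⟩
    cases p <;> simp_all

theorem countP_snd_eq_count (hu : ∀ y ∈ u, y.1 = false) :
    u.countP Prod.snd = u.count (false, true) := by
  refine List.countP_congr fun y hy => ?_
  obtain ⟨r, s⟩ := y
  simp [show r = false from hu _ hy]

theorem forall_fst_eq_false_iff (hstar : (true, true) ∉ u) :
    (∀ y ∈ u, y.1 = false) ↔ u.count (true, false) = 0 := by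
  rw [List.count_eq_zero]
  refine ⟨fun h hmem => by simpa using h _ hmem, fun h => ?_⟩
  rintro ⟨_ | _, _ | _⟩ hy <;> simp_all

theorem starBlocks_eq_one_iff (hu : ∀ y ∈ u, y.1 = false) (hv : ∀ y ∈ v, y.1 = false)
    (hcount : u.count (false, true) = 1) (hR : R.getLast? = some (true, false))
    (hstar : (true, true) ∉ R) {X : List (Bool × Bool)}
    (hX : X = u ++ (true, true) :: (v ++ (true, true) :: R)) :
    (blockLength Prod.snd X (u.countP Prod.fst) = 1 ∧
        blockLength Prod.fst X (u.countP Prod.snd + 1) = 1) ∧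
      blockLength Prod.snd X ((u ++ (true, true) :: v).countP Prod.fst) = 1 ∧
        blockLength Prod.fst X ((u ++ (true, true) :: v).countP Prod.snd + 1) = 1 ↔
    u = [(false, true)] ∧ ∃ p q, R = p ++ (true, false) :: (true, false) :: q ∧
      p.countP Prod.fst = v.countP Prod.snd ∧ ∀ x ∈ p.head?, x.1 = true := by
  have hfst (j : ℕ) : blockLength Prod.fst X (j + 2) = blockLength Prod.fst R j := by
    rw [hX, blockLength_fst_append_cons hu, blockLength_fst_append_cons hv]
  have hsnd : (u ++ (true, true) :: v).countP Prod.snd + 1 = v.countP Prod.snd + 1 + 2 := by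
    rw [List.countP_append, List.countP_cons_of_pos rfl, countP_snd_eq_count hu, hcount]
    omega
  rw [hsnd, hfst, countP_snd_eq_count hu, hcount, hfst, List.countP_append,
    List.countP_cons_of_pos rfl, countP_fst_eq_zero hu, countP_fst_eq_zero hv,
    ← blockLength_fst_zero_succ_iff hR hstar,
    ← blockLength_snd_zero_one_iff (v ++ (true, true) :: R) hu hcount, ← hX]
  tauto

end HatShape

/-- The conditions on the pieces `v`, `p`, `q` of a path `hatPath v p q`. For its distinguished
indices `k₁ < k₂`, `head_fst` encodes `s_{k₁} = 1` and `countP_fst` encodes `s_{k₂} = 1`; the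
equations `r_{k₁} = r_{k₂} = 1` and `x₁ = 1` are encoded in the initial letter of `hatPath v p q`,
and `y₂ = 0` in `fst_eq_false`. -/
structure IsHatSplit (v p q : List (Bool × Bool)) : Prop where
  fst_eq_false : ∀ y ∈ v, y.1 = false
  head_fst : ∀ x ∈ p.head?, x.1 = true
  countP_fst : p.countP Prod.fst = v.countP Prod.snd
  star_notMem_middle : (true, true) ∉ p
  star_notMem_right : (true, true) ∉ q

/-- The flag pairs of a path counted by the theorem; its two letters `(true, true)` are the
distinguished indices. -/
def hatPath (v p q : List (Bool × Bool)) : List (Bool × Bool) :=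
  (false, true) :: (true, true) ::
    (v ++ (true, true) :: (p ++ (true, false) :: (true, false) :: q))

/-- The path `hatPath v p q` without its letters `(true, true)`, its first up step and one of the
two consecutive down steps. -/
def corePath (v p q : List (Bool × Bool)) : List (Bool × Bool) :=
  v ++ (p ++ (true, false) :: q)

theorem IsHatSplit.star_notMem_left {v p q : List (Bool × Bool)} (h : IsHatSplit v p q) :
    (true, true) ∉ v := fun hmem => by simpa using h.fst_eq_false _ hmem

section HatStatistics

variable {n : ℕ} {w : List Bool}

theorem IsDyckWord.stat_eq_blockLength_of_star (hw : IsDyckWord n w) {u Y : List (Bool × Bool)}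
    (hX : flagPairs w = u ++ (true, true) :: Y) :
    rStat w (u.length + 1) = blockLength Prod.snd (flagPairs w) (u.countP Prod.fst) ∧
      sStat w (u.length + 1) = blockLength Prod.fst (flagPairs w) (u.countP Prod.snd + 1) := by
  have htake : (flagPairs w).take u.length = u := by simp [hX]
  obtain ⟨hi, hr, hs⟩ := (hw.getElem?_flagPairs_eq_star_iff (i := u.length)).1 (by simp [hX])
  have hi : u.length + 1 < n := by
    have := Finset.mem_Icc.1 hi
    omega
  exact ⟨by rw [hw.rStat_eq_blockLength hi hr, htake],
    by rw [hw.sStat_eq_blockLength hi hs, htake]⟩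

theorem IsDyckWord.hatStats_iff (hn : 0 < n) (hw : IsDyckWord n w) {u v R : List (Bool × Bool)}
    (hX : flagPairs w = u ++ (true, true) :: (v ++ (true, true) :: R))
    (hu : (true, true) ∉ u) (hv : (true, true) ∉ v) (hR : (true, true) ∉ R) :
    (LStat n w = 4 ∧ xStat w (u.length + 1) = 1 ∧
        yStat w ((u ++ (true, true) :: v).length + 1) = 0) ↔
      u = [(false, true)] ∧ (∀ y ∈ v, y.1 = false) ∧
        ∃ p q, R = p ++ (true, false) :: (true, false) :: q ∧
          p.countP Prod.fst = v.countP Prod.snd ∧ ∀ x ∈ p.head?, x.1 = true := by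
  have hX' : flagPairs w = (u ++ (true, true) :: v) ++ (true, true) :: R := by simp [hX]
  have hlen : (u ++ (true, true) :: v).length < n := by
    rw [← hw.length_flagPairs, hX', List.length_append (bs := (true, true) :: R), List.length_cons]
    omega
  have hlen₁ : u.length < n := by
    rw [List.length_append] at hlen
    omega
  have hlast : R.getLast? = some (true, false) := by
    have hXlast := (hw.isFirstPassage_flagPairs hn).getLast?_eq le_rfl
    rw [hX', List.getLast?_append_cons] at hXlast
    cases R <;> simp_all
  have hL : LStat n w = 4 ↔ _ :=
    LStat_eq_four_iff (hw.twoStars_iff.2 ⟨u, v, R, hX, hu, hv, hR, rfl, rfl⟩)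
  obtain ⟨hr₁, hs₁⟩ := hw.stat_eq_blockLength_of_star hX
  obtain ⟨hr₂, hs₂⟩ := hw.stat_eq_blockLength_of_star hX'
  have hx : xStat w (u.length + 1) = u.count (false, true) := by
    rw [hw.xStat_eq_count hlen₁, hX, List.take_left]
  have hy : yStat w ((u ++ (true, true) :: v).length + 1) = 0 ↔
      (∀ y ∈ u, y.1 = false) ∧ ∀ y ∈ v, y.1 = false := by
    rw [hw.yStat_eq_count hlen, hX', List.take_left, forall_fst_eq_false_iff hu,
      forall_fst_eq_false_iff hv]
    simp
  rw [hL, hx, hy, hr₁, hs₁, hr₂, hs₂]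
  constructor
  · rintro ⟨hblocks, hcount, hu0, hv0⟩
    obtain ⟨rfl, hRshape⟩ := (starBlocks_eq_one_iff hu0 hv0 hcount hlast hR hX).1 hblocks
    exact ⟨rfl, hv0, hRshape⟩
  · rintro ⟨rfl, hv0, hRshape⟩
    exact ⟨(starBlocks_eq_one_iff (by simp) hv0 rfl hlast hR hX).2 ⟨rfl, hRshape⟩, rfl,
      by simp, hv0⟩

theorem IsDyckWord.isHat_iff (hn : 0 < n) (hw : IsDyckWord n w) :
    (LStat n w = 4 ∧ ∃ k₁ k₂, twoStars n w k₁ k₂ ∧ xStat w k₁ = 1 ∧ yStat w k₂ = 0) ↔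
      ∃ v p q, IsHatSplit v p q ∧ flagPairs w = hatPath v p q := by
  constructor
  · rintro ⟨hL, k₁, k₂, hstars, hx, hy⟩
    obtain ⟨u, v, R, hX, hu, hv, hR, rfl, rfl⟩ := hw.twoStars_iff.1 hstars
    obtain ⟨rfl, hv0, p, q, rfl, hc, hhead⟩ := (hw.hatStats_iff hn hX hu hv hR).1 ⟨hL, hx, hy⟩
    exact ⟨v, p, q, ⟨hv0, hhead, hc, by simp_all, by simp_all⟩, hX⟩
  · rintro ⟨v, p, q, h, hX⟩
    have hR : (true, true) ∉ p ++ (true, false) :: (true, false) :: q := by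
      simp [h.star_notMem_middle, h.star_notMem_right]
    have hX' : flagPairs w = [(false, true)] ++ (true, true) :: (v ++ (true, true) ::
      (p ++ (true, false) :: (true, false) :: q)) := hX
    obtain ⟨hL, hx, hy⟩ := (hw.hatStats_iff hn hX' (by simp) h.star_notMem_left hR).2
      ⟨rfl, h.fst_eq_false, p, q, rfl, h.countP_fst, h.head_fst⟩
    exact ⟨hL, _, _, hw.twoStars_iff.2 ⟨_, v, _, hX', by simp, h.star_notMem_left, hR, rfl, rfl⟩,
      hx, hy⟩

end HatStatistics

/-! ### The correspondence with Motzkin paths -/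

section HatSplit

variable {v p q : List (Bool × Bool)}

theorem isFirstPassage_forall_fst_append {h : ℤ} (h0 : 0 ≤ h) (hv : ∀ y ∈ v, y.1 = false)
    (X : List (Bool × Bool)) :
    IsFirstPassage h (v ++ X) ↔ IsFirstPassage (h + v.countP Prod.snd) X := by
  have hv0 := countP_fst_eq_zero hv
  rw [isFirstPassage_append_of_countP_le (by omega), hv0, Nat.cast_zero, sub_zero]

theorem IsHatSplit.isFirstPassage_hatPath_iff (h : IsHatSplit v p q) :
    IsFirstPassage 0 (hatPath v p q) ↔ IsFirstPassage (p.countP Prod.snd - 1) q := by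
  have hc := h.countP_fst
  have hends : IsFirstPassage (1 + p.countP Prod.snd) ((true, false) :: (true, false) :: q) ↔
      IsFirstPassage (p.countP Prod.snd - 1) q := by
    simp [IsFirstPassage, (by omega : (0 : ℤ) ≤ 1 + p.countP Prod.snd)]
  have hstart (X : List (Bool × Bool)) :
      IsFirstPassage 0 ((false, true) :: (true, true) :: X) ↔ IsFirstPassage 1 X := by
    simp [IsFirstPassage]
  have hstar {g : ℤ} (hg : 0 ≤ g) (X : List (Bool × Bool)) :
      IsFirstPassage g ((true, true) :: X) ↔ IsFirstPassage g X := by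
    simp [IsFirstPassage, hg]
  rw [hatPath, hstart, isFirstPassage_forall_fst_append zero_le_one h.fst_eq_false,
    hstar (by omega), isFirstPassage_append_of_countP_le (by omega), hc, add_sub_right_comm,
    add_sub_cancel_right, hends]

theorem IsHatSplit.isFirstPassage_corePath_iff (h : IsHatSplit v p q) :
    IsFirstPassage 0 (corePath v p q) ↔ IsFirstPassage (p.countP Prod.snd - 1) q := by
  have hc := h.countP_fst
  rw [corePath, isFirstPassage_forall_fst_append le_rfl h.fst_eq_false,
    isFirstPassage_append_of_countP_le (by omega), hc]
  simp [IsFirstPassage]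

theorem length_hatPath (v p q : List (Bool × Bool)) :
    (hatPath v p q).length = (corePath v p q).length + 4 := by
  grind [hatPath, corePath]

theorem IsHatSplit.star_notMem_corePath (h : IsHatSplit v p q) :
    (true, true) ∉ corePath v p q := by
  simp [corePath, h.star_notMem_left, h.star_notMem_middle, h.star_notMem_right]

theorem takeWhile_append_of_head?_fst {X : List (Bool × Bool)} (hv : ∀ y ∈ v, y.1 = false)
    (hX : ∀ x ∈ X.head?, x.1 = true) : (v ++ X).takeWhile (!·.1) = v := by
  rw [List.takeWhile_append_of_pos (by simpa using hv)]
  cases X <;> simp_all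

theorem append_cons_inj_of_countP {α : Type*} {f : α → Bool} {a b : α} {l l' m m' : List α}
    (ha : f a = true) (hb : f b = true) (hc : l.countP f = l'.countP f)
    (h : l ++ a :: m = l' ++ b :: m') : l = l' ∧ m = m' := by
  induction l generalizing l' with
  | nil => cases l' <;> simp_all
  | cons x l ih => cases l' <;> grind

theorem IsHatSplit.head?_append_cons (h : IsHatSplit v p q) (X : List (Bool × Bool)) :
    ∀ x ∈ (p ++ (true, false) :: X).head?, x.1 = true := by
  have hhead := h.head_fst
  cases p <;> simp_all

theorem IsHatSplit.eq_of_corePath_eq {v' p' q' : List (Bool × Bool)} (h : IsHatSplit v p q)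
    (h' : IsHatSplit v' p' q') (heq : corePath v p q = corePath v' p' q') :
    (v, p, q) = (v', p', q') := by
  have hv : v = v' := by
    rw [← takeWhile_append_of_head?_fst h.fst_eq_false (h.head?_append_cons q),
      ← takeWhile_append_of_head?_fst h'.fst_eq_false (h'.head?_append_cons q')]
    exact congrArg _ heq
  subst hv
  obtain ⟨rfl, rfl⟩ := append_cons_inj_of_countP rfl rfl (h.countP_fst.trans h'.countP_fst.symm)
    (List.append_cancel_left heq)
  rfl

theorem IsHatSplit.eq_of_hatPath_eq {v' p' q' : List (Bool × Bool)} (h : IsHatSplit v p q)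
    (h' : IsHatSplit v' p' q') (heq : hatPath v p q = hatPath v' p' q') :
    (v, p, q) = (v', p', q') := by
  have heq : v ++ (true, true) :: (p ++ (true, false) :: (true, false) :: q) =
      v' ++ (true, true) :: (p' ++ (true, false) :: (true, false) :: q') := by
    simpa [hatPath] using heq
  obtain ⟨rfl, hpq⟩ := append_cons_inj_of_countP (f := Prod.fst) rfl rfl
    (by rw [countP_fst_eq_zero h.fst_eq_false, countP_fst_eq_zero h'.fst_eq_false]) heq
  obtain ⟨rfl, hq⟩ := append_cons_inj_of_countP rfl rfl (h.countP_fst.trans h'.countP_fst.symm) hpq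
  rw [List.cons_injective hq]

theorem exists_corePath_eq {Y : List (Bool × Bool)} (hY : IsFirstPassage 0 Y)
    (hstar : (true, true) ∉ Y) : ∃ v p q, IsHatSplit v p q ∧ corePath v p q = Y := by
  obtain ⟨v, R, rfl, hv, hR⟩ : ∃ v R, Y = v ++ R ∧ (∀ y ∈ v, y.1 = false) ∧
      ∀ x ∈ R.head?, x.1 = true := by
    refine ⟨Y.takeWhile (!·.1), Y.dropWhile (!·.1), List.takeWhile_append_dropWhile.symm,
      fun y hy => by simpa using List.mem_takeWhile_imp hy, fun x hx => ?_⟩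
    have hnot := List.head?_dropWhile_not (!·.1) Y
    rw [Option.mem_def.1 hx] at hnot
    simpa using hnot
  have hcount : v.countP Prod.snd < R.countP Prod.fst := by
    have hc := (isFirstPassage_iff_take.1 hY).2
    rw [List.countP_append, List.countP_append, countP_fst_eq_zero hv] at hc
    omega
  obtain ⟨p, ⟨r, s⟩, q, rfl, rfl, hp⟩ := exists_eq_append_cons_of_lt_countP hcount
  simp only [List.mem_append, List.mem_cons, not_or, Prod.mk.injEq, true_and] at hstar
  obtain ⟨-, hpstar, hs, hqstar⟩ := hstar
  obtain rfl : s = false := Bool.eq_false_iff.2 (Ne.symm hs)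
  refine ⟨v, p, q, ⟨hv, fun x hx => hR x ?_, hp, hpstar, hqstar⟩, rfl⟩
  rw [List.head?_append, Option.mem_def.1 hx, Option.some_or, Option.mem_some_iff]

end HatSplit

/-- The splits for which the path `corePath v p q` is a first passage from `0` of length `m`. -/
def hatSplits (m : ℕ) : Set (List (Bool × Bool) × List (Bool × Bool) × List (Bool × Bool)) :=
  {(v, p, q) | IsHatSplit v p q ∧ (corePath v p q).length = m ∧ IsFirstPassage 0 (corePath v p q)}

theorem bijOn_hatPath (m : ℕ) :
    Set.BijOn (fun (v, p, q) => hatPath v p q) (hatSplits m)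
      {X | (X.length = m + 4 ∧ IsFirstPassage 0 X) ∧
        ∃ v p q, IsHatSplit v p q ∧ X = hatPath v p q} := by
  refine ⟨?_, ?_, ?_⟩
  · rintro ⟨v, p, q⟩ ⟨h, hlen, hpass⟩
    exact ⟨⟨by rw [length_hatPath, hlen],
      h.isFirstPassage_hatPath_iff.2 (h.isFirstPassage_corePath_iff.1 hpass)⟩, v, p, q, h, rfl⟩
  · rintro ⟨v, p, q⟩ ⟨h, -⟩ ⟨v', p', q'⟩ ⟨h', -⟩ heq
    exact h.eq_of_hatPath_eq h' heq
  · rintro _ ⟨⟨hlen, hpass⟩, v, p, q, h, rfl⟩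
    rw [length_hatPath, Nat.add_right_cancel_iff] at hlen
    exact ⟨(v, p, q), ⟨h, hlen,
      h.isFirstPassage_corePath_iff.2 (h.isFirstPassage_hatPath_iff.1 hpass)⟩, rfl⟩

theorem bijOn_corePath (m : ℕ) :
    Set.BijOn (fun (v, p, q) => corePath v p q) (hatSplits m)
      {Y | (Y.length = m ∧ IsFirstPassage 0 Y) ∧ (true, true) ∉ Y} := by
  refine ⟨?_, ?_, ?_⟩
  · rintro ⟨v, p, q⟩ ⟨h, hlen, hpass⟩
    exact ⟨⟨hlen, hpass⟩, h.star_notMem_corePath⟩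
  · rintro ⟨v, p, q⟩ ⟨h, -⟩ ⟨v', p', q'⟩ ⟨h', -⟩ heq
    exact h.eq_of_corePath_eq h' heq
  · rintro Y ⟨⟨hlen, hpass⟩, hstar⟩
    obtain ⟨v, p, q, h, rfl⟩ := exists_corePath_eq hpass hstar
    exact ⟨(v, p, q), ⟨h, hlen, hpass⟩, rfl⟩

theorem bijOn_flagPairs_hat {n : ℕ} (hn : 0 < n) :
    Set.BijOn flagPairs
      {w | IsDyckWord n w ∧ LStat n w = 4 ∧ ∃ k₁ k₂, twoStars n w k₁ k₂ ∧
        xStat w k₁ = 1 ∧ yStat w k₂ = 0}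
      {X | (X.length = n ∧ IsFirstPassage 0 X) ∧
        ∃ v p q, IsHatSplit v p q ∧ X = hatPath v p q} := by
  refine ⟨?_, (injOn_flagPairs hn).mono fun w hw => hw.1, ?_⟩
  · rintro w ⟨hw, hhat⟩
    exact ⟨(bijOn_flagPairs hn).mapsTo hw, (hw.isHat_iff hn).1 hhat⟩
  · rintro X ⟨hX, hshape⟩
    obtain ⟨w, hw, rfl⟩ := (bijOn_flagPairs hn).surjOn hX
    exact ⟨w, ⟨hw, (IsDyckWord.isHat_iff hn hw).2 hshape⟩, rfl⟩

/-- The step described at `flagPairs` of the same height change as a step of a Motzkin path. -/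
def motzkinStep : Option Bool → Bool × Bool
  | none => (false, false)
  | some true => (false, true)
  | some false => (true, false)

/-- The path of a Motzkin word, extended by a down step to height `-1`. -/
def closeMotzkin (Q : List (Option Bool)) : List (Bool × Bool) :=
  Q.map motzkinStep ++ [(true, false)]

theorem motzkinStep_injective : Function.Injective motzkinStep := by
  rintro (_ | _ | _) (_ | _ | _) h <;> simp_all [motzkinStep]

theorem range_motzkinStep : Set.range motzkinStep = {x | x ≠ (true, true)} := by
  ext ⟨r, s⟩
  cases r <;> cases s <;> simp [motzkinStep, Option.exists]

theorem closeMotzkin_injective : Function.Injective closeMotzkin := fun _ _ h =>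
  motzkinStep_injective.list_map (List.append_cancel_right h)

theorem countP_map_motzkinStep (Q : List (Option Bool)) :
    (Q.map motzkinStep).countP Prod.fst = Q.count (some false) ∧
      (Q.map motzkinStep).countP Prod.snd = Q.count (some true) := by
  rw [List.countP_map, List.countP_map]
  constructor <;> refine List.countP_congr fun a _ => ?_ <;>
    rcases a with _ | _ | _ <;> simp [motzkinStep]

theorem isFirstPassage_closeMotzkin_iff {Q : List (Option Bool)} :
    IsFirstPassage 0 (closeMotzkin Q) ↔ IsMotzkinWord Q := by
  have hle : (∀ P, P <+: Q → P.count (some false) ≤ P.count (some true)) ↔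
      ∀ k < Q.length + 1, (Q.take k).count (some false) ≤ (Q.take k).count (some true) :=
    ⟨fun h k _ => h _ (List.take_prefix k Q), fun h P hP => by
      rw [List.prefix_iff_eq_take.1 hP]
      exact h _ (Nat.lt_succ_of_le hP.length_le)⟩
  have htake {k : ℕ} (hk : k < Q.length + 1) :
      (closeMotzkin Q).take k = (Q.take k).map motzkinStep := by
    rw [closeMotzkin, List.take_append_of_le_length (by simpa [Nat.lt_succ_iff] using hk),
      List.map_take]
  rw [isFirstPassage_iff_take, IsMotzkinWord, hle, and_comm]
  refine and_congr ?_ ?_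
  · simp only [closeMotzkin, List.countP_append, countP_map_motzkinStep]
    simp
  · rw [show (closeMotzkin Q).length = Q.length + 1 by simp [closeMotzkin]]
    refine forall₂_congr fun k hk => ?_
    rw [htake hk, (countP_map_motzkinStep _).1, (countP_map_motzkinStep _).2, zero_add,
      Nat.cast_le]

theorem bijOn_closeMotzkin (N : ℕ) :
    Set.BijOn closeMotzkin {Q | Q.length = N ∧ IsMotzkinWord Q}
      {Y | (Y.length = N + 1 ∧ IsFirstPassage 0 Y) ∧ (true, true) ∉ Y} := by
  have hrange (t : List (Bool × Bool)) :
      (true, true) ∉ t ++ [(true, false)] ↔ t ∈ Set.range (List.map motzkinStep) := by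
    rw [Set.range_list_map, range_motzkinStep]
    simp
  refine ⟨?_, closeMotzkin_injective.injOn, ?_⟩
  · rintro Q ⟨rfl, hQ⟩
    exact ⟨⟨by simp [closeMotzkin], isFirstPassage_closeMotzkin_iff.2 hQ⟩,
      (hrange _).2 ⟨Q, rfl⟩⟩
  · rintro Y ⟨⟨hlen, hpass⟩, hstar⟩
    obtain ⟨t, rfl⟩ := List.getLast?_eq_some_iff.1 (hpass.getLast?_eq le_rfl)
    obtain ⟨Q, rfl⟩ := (hrange t).1 hstar
    exact ⟨Q, ⟨by simpa using hlen, isFirstPassage_closeMotzkin_iff.1 hpass⟩, rfl⟩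

/-- **Lemma.** For `n ≥ 5`, the number of Dyck paths `D ∈ 𝒟̂ₙ` with
`x₁(D) = 1` and `y₂(D) = 0` is `M_{n-5}`. -/
theorem dyckHat_x1_one_y2_zero_count (n : ℕ) (hn : 5 ≤ n) :
    {w | IsDyckWord n w ∧ LStat n w = 4 ∧ ∃ k₁ k₂, twoStars n w k₁ k₂ ∧
        xStat w k₁ = 1 ∧ yStat w k₂ = 0}.ncard = motzkin (n - 5) := by
  obtain ⟨N, rfl⟩ := Nat.exists_eq_add_of_le' hn
  rw [Nat.add_sub_cancel, (bijOn_flagPairs_hat (Nat.succ_pos _)).ncard_eq,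
    ← (bijOn_hatPath (N + 1)).ncard_eq, (bijOn_corePath (N + 1)).ncard_eq,
    ← (bijOn_closeMotzkin N).ncard_eq, motzkin]
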